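/- Let p, q ∈ ℕ with p − q ≡ 3 or 7 (mod 8), set d = p + q, and let α = −1 if p − q ≡ 3 (mod 8) and α = +1 if p − q ≡ 7 (mod 8). Let γ₀ : Cl_{p,q} → End_ℝ(S₀) be an elementary real pinor representation and J = γ₀(ω) the image of the Clifford volume element. Then there exists an invertible D ∈ End_ℝ(S₀) such that (1) D ∘ γ₀(ι(v)) = −γ₀(ι(v)) ∘ D for all v ∈ ℝ^d, and (2) D ∘ D = α·id. Moreover, every such D also satisfies D ∘ J = −J ∘ D, and any D' ∈ End_ℝ(S₀) satisfying (1) and (2) is of the form D' = (a·id + b·J) ∘ D for some a, b ∈ ℝ with a² + b² = 1. -/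

import Mathlib

/-!
Since `p - q` is `3` modulo `4`, the volume element `J` is central in the image of `γ₀` and squares
to `-1`. An operator anticommuting with every generator anticommutes with `J`, a product of oddly
many generators. If `D` and `D'` anticommute with all generators, then `D' * D` commutes with the
whole image, so Schur's lemma over `ℂ`, with `J` as imaginary unit, gives `D' * D = a + b J`;
comparing squares yields `a² + b² = 1`.

For existence, consider first signature `(n, n + 1)`. If `a² = 1`, `b² = -1` and `a b = -b a`, then
`a` and `c = a b` generate a copy of the `2 × 2` matrices whose commutant is the endomorphism
algebra of the `+1` eigenspace of `a`. It contains `c x` for every other generator `x`, and these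
form a system of signature `(n - 1, n)`. A solution `E` for them gives the solution `E c` for the
original system, and the induction ends at `(0, 1)`, where `D` is a complex conjugation.

In general `p - q = ±4j - 1`. Replacing `x` by `J x` for `2j` generators `x` flips the signs of
their squares and leads to signature `(n, n + 1)`. A solution `K` there anticommutes with `J`,
hence commutes with the `2j` generators, and `D = K ∏ x` over them anticommutes with all generators
and has square `(-1)^j = α`.
-/

/-- Two elements `a`, `b` anticommute when `a * b = -(b * a)`. -/
def Anticommute {R : Type*} [Mul R] [Neg R] (a b : R) : Prop :=
  a * b = -(b * a)

section Anticommute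

variable {R : Type*} [Monoid R] [HasDistribNeg R] {a b x y J : R} {l : List R}

namespace Anticommute

theorem symm (h : Anticommute a b) : Anticommute b a := by
  rw [Anticommute, h, neg_neg]

theorem semiconjBy (h : Anticommute a b) : SemiconjBy a b (-b) := by
  rw [SemiconjBy, h, neg_mul]

theorem of_semiconjBy (h : SemiconjBy a b (-b)) : Anticommute a b := by
  rw [Anticommute, h.eq, neg_mul]

theorem commute_mul_right (hx : Anticommute a x) (hy : Anticommute a y) : Commute a (x * y) := by
  have h := hx.semiconjBy.mul_right hy.semiconjBy
  rwa [neg_mul_neg] at h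

theorem commute_mul_left (ha : Anticommute a x) (hb : Anticommute b x) : Commute (a * b) x :=
  (ha.symm.commute_mul_right hb.symm).symm

theorem mul_right (hx : Anticommute a x) (hy : Commute a y) : Anticommute a (x * y) :=
  of_semiconjBy <| by simpa only [neg_mul] using hx.semiconjBy.mul_right hy

theorem mul_right' (hx : Commute a x) (hy : Anticommute a y) : Anticommute a (x * y) :=
  of_semiconjBy <| by simpa only [mul_neg] using SemiconjBy.mul_right hx hy.semiconjBy

theorem mul_left (ha : Anticommute a x) (hb : Commute b x) : Anticommute (a * b) x :=
  (ha.symm.mul_right hb.symm).symm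

theorem mul_left' (ha : Commute a x) (hb : Anticommute b x) : Anticommute (a * b) x :=
  (mul_right' ha.symm hb.symm).symm

theorem mul_self_mul (h : Anticommute a b) : a * b * (a * b) = -(a * a * (b * b)) := by
  rw [mul_assoc, ← mul_assoc b, h.symm, neg_mul, mul_neg, mul_assoc a b b, ← mul_assoc]

theorem mul_list_prod (h : ∀ x ∈ l, Anticommute a x) :
    a * l.prod = (-1) ^ l.length * (l.prod * a) := by
  induction l with
  | nil => simp
  | cons x l ih =>
    obtain ⟨hx, hl⟩ := List.forall_mem_cons.1 h
    have hsign := (Commute.neg_one_left x).pow_left l.length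
    calc a * (x :: l).prod = -(x * (a * l.prod)) := by
          rw [List.prod_cons, ← mul_assoc, hx, neg_mul, mul_assoc]
      _ = -(x * (-1) ^ l.length * (l.prod * a)) := by rw [ih hl, mul_assoc]
      _ = (-1) ^ (x :: l).length * ((x :: l).prod * a) := by
          rw [← hsign.eq, List.length_cons, pow_succ', List.prod_cons, neg_one_mul, neg_mul,
            mul_assoc, mul_assoc]

theorem list_prod_right (h : ∀ x ∈ l, Anticommute a x) (hl : Odd l.length) :
    Anticommute a l.prod := by
  rw [Anticommute, mul_list_prod h, hl.neg_one_pow, neg_one_mul]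

theorem commute_list_prod_right (h : ∀ x ∈ l, Anticommute a x) (hl : Even l.length) :
    Commute a l.prod := by
  rw [Commute, SemiconjBy, mul_list_prod h, hl.neg_one_pow, one_mul]

end Anticommute

theorem mul_list_prod_of_pairwise_anticommute (h : l.Pairwise Anticommute) (hx : x ∈ l) :
    x * l.prod = (-1) ^ (l.length + 1) * (l.prod * x) := by
  induction l with
  | nil => cases hx
  | cons y l ih =>
    obtain ⟨hy, hl⟩ := List.pairwise_cons.1 h
    have hsign := fun n => ((Commute.neg_one_left y).pow_left n).eq
    rw [List.prod_cons, List.length_cons]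
    rcases List.mem_cons.1 hx with rfl | hxl
    · calc x * (x * l.prod) = x * (-1) ^ l.length * (l.prod * x) := by
            rw [Anticommute.mul_list_prod hy, mul_assoc]
        _ = (-1) ^ (l.length + 1 + 1) * (x * l.prod * x) := by
            rw [← hsign, pow_succ, pow_succ, mul_neg_one, mul_neg_one, neg_neg,
              mul_assoc, mul_assoc]
    · calc x * (y * l.prod) = -(y * (x * l.prod)) := by
            rw [← mul_assoc, (hy x hxl).symm, neg_mul, mul_assoc]
        _ = -(y * (-1) ^ (l.length + 1) * (l.prod * x)) := by rw [ih hl hxl, mul_assoc]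
        _ = (-1) ^ (l.length + 1 + 1) * (y * l.prod * x) := by
            rw [← hsign, pow_succ _ (l.length + 1), mul_neg_one, neg_mul, mul_assoc, mul_assoc]

theorem commute_list_prod_of_pairwise_anticommute (h : l.Pairwise Anticommute)
    (hl : Odd l.length) (hx : x ∈ l) : Commute x l.prod := by
  rw [Commute, SemiconjBy, mul_list_prod_of_pairwise_anticommute h hx, hl.add_one.neg_one_pow,
    one_mul]

theorem anticommute_list_prod_of_pairwise_anticommute (h : l.Pairwise Anticommute)
    (hl : Even l.length) (hx : x ∈ l) : Anticommute x l.prod := by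
  rw [Anticommute, mul_list_prod_of_pairwise_anticommute h hx, hl.add_one.neg_one_pow,
    neg_one_mul]

theorem list_prod_mul_self_of_pairwise_anticommute (h : l.Pairwise Anticommute) :
    l.prod * l.prod = (-1) ^ l.length.choose 2 * (l.map fun x => x * x).prod := by
  induction l with
  | nil => simp
  | cons x l ih =>
    obtain ⟨hx, hl⟩ := List.pairwise_cons.1 h
    have hsign := fun n => ((Commute.neg_one_left x).pow_left n).eq
    calc (x :: l).prod * (x :: l).prod = x * (l.prod * x) * l.prod := by
          rw [List.prod_cons, mul_assoc, mul_assoc, mul_assoc]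
      _ = x * ((-1) ^ l.length * (x * l.prod)) * l.prod := by
          rw [Anticommute.mul_list_prod hx, ← mul_assoc ((-1) ^ _), ← pow_add,
            Even.neg_one_pow ⟨_, rfl⟩, one_mul]
      _ = (-1) ^ l.length * (x * x * (l.prod * l.prod)) := by
          rw [← mul_assoc x, ← hsign]; simp only [mul_assoc]
      _ = (-1) ^ l.length * (x * x * (-1) ^ l.length.choose 2) * (l.map fun x => x * x).prod := by
          rw [ih hl]; simp only [mul_assoc]
      _ = (-1) ^ (x :: l).length.choose 2 * ((x :: l).map fun x => x * x).prod := by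
          rw [mul_assoc x, ← hsign, ← mul_assoc x, ← hsign, List.length_cons, Nat.choose_succ_succ,
            Nat.choose_one_right, pow_add, List.map_cons, List.prod_cons]
          simp only [mul_assoc]

omit [HasDistribNeg R] in
theorem list_prod_map_mul_left (h : ∀ x ∈ l, Commute J x) :
    (l.map (J * ·)).prod = J ^ l.length * l.prod := by
  induction l with
  | nil => simp
  | cons x l ih =>
    obtain ⟨hx, hl⟩ := List.forall_mem_cons.1 h
    rw [List.map_cons, List.prod_cons, ih hl, List.prod_cons, List.length_cons, pow_succ',
      mul_assoc, mul_assoc, ← mul_assoc x, ← (hx.pow_left _).eq, mul_assoc]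

end Anticommute

/-- The images in a ring of an orthonormal basis of signature `(p, q)` under a representation of
its Clifford algebra: `A` lists the `p` generators of square `1` and `B` the `q` generators of
square `-1`. -/
structure IsCliffordSystem {R : Type*} [Ring R] (A B : List R) : Prop where
  mul_self_left : ∀ a ∈ A, a * a = 1
  mul_self_right : ∀ b ∈ B, b * b = -1
  pairwise : (A ++ B).Pairwise Anticommute

section Flip

variable {R : Type*} [Monoid R] [HasDistribNeg R] {J K : R} {L₁ M L₂ : List R}

theorem pairwise_anticommute_flip (h : (L₁ ++ M ++ L₂).Pairwise Anticommute)
    (hJ : ∀ x ∈ L₁ ++ M ++ L₂, Commute J x) :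
    (L₁ ++ M.map (J * ·) ++ L₂).Pairwise Anticommute := by
  simp only [List.pairwise_append, List.mem_append, List.pairwise_map, List.mem_map,
    forall_exists_index, and_imp, forall_apply_eq_imp_iff₂] at h hJ ⊢
  obtain ⟨⟨h₁, hM, h₁M⟩, h₂, h₁₂⟩ := h
  have hJM : ∀ x ∈ M, Commute J x := fun x hx => hJ x (.inl (.inr hx))
  refine ⟨⟨h₁, hM.imp_of_mem fun {x y} hx hy hxy => ?_, fun x hx y hy => ?_⟩, h₂, ?_⟩
  · exact .mul_left' (.mul_right (.refl J) (hJM y hy)) (.mul_right' (hJM x hx).symm hxy)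
  · exact .mul_right' (hJ x (.inl (.inl hx))).symm (h₁M x hx y hy)
  · rintro x (hx | ⟨x, hx, rfl⟩) y hy
    · exact h₁₂ x (.inl hx) y hy
    · exact .mul_left' (hJ y (.inr hy)) (h₁₂ x (.inr hx) y hy)

omit [HasDistribNeg R] in
theorem list_prod_flip (hJ : ∀ x ∈ L₁ ++ M, Commute J x) :
    (L₁ ++ M.map (J * ·) ++ L₂).prod = J ^ M.length * (L₁ ++ M ++ L₂).prod := by
  obtain ⟨h₁, hM⟩ := List.forall_mem_append.1 hJ
  simp only [List.prod_append]
  rw [list_prod_map_mul_left hM, ← mul_assoc,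
    ← ((Commute.list_prod_right _ _ h₁).pow_left _).eq]
  simp only [mul_assoc]

theorem Anticommute.of_flip (hJ : J = (L₁ ++ M ++ L₂).prod) (hJJ : J * J = -1)
    (hJc : ∀ x ∈ L₁ ++ M, Commute J x) (hodd : Odd (L₁ ++ M ++ L₂).length) (heven : Even M.length)
    (hK : ∀ x ∈ L₁ ++ M.map (J * ·) ++ L₂, Anticommute K x) : Anticommute K J := by
  obtain ⟨j, hj⟩ := heven
  have hprod : (L₁ ++ M.map (J * ·) ++ L₂).prod = (-1) ^ j * J := by
    rw [list_prod_flip hJc, ← hJ, hj, pow_add, ← (Commute.refl J).mul_pow, hJJ]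
  have h : Anticommute K ((-1) ^ j * J) := hprod ▸ list_prod_right hK (by simpa using hodd)
  have hsign : Commute K ((-1) ^ j) := (Commute.neg_one_right K).pow_right j
  simpa only [← mul_assoc, ← pow_add, Even.neg_one_pow ⟨j, rfl⟩, one_mul] using
    Anticommute.mul_right' hsign h

theorem commute_of_flip (hJJ : J * J = -1) (hKJ : Anticommute K J)
    (hK : ∀ x ∈ M, Anticommute K (J * x)) : ∀ x ∈ M, Commute K x := by
  intro x hx
  have h := hKJ.commute_mul_right (hK x hx)
  rw [← mul_assoc, hJJ, neg_one_mul] at h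
  simpa using h.neg_right

theorem anticommute_mul_list_prod_of_flip (h : (L₁ ++ M ++ L₂).Pairwise Anticommute)
    (heven : Even M.length) (hKM : ∀ x ∈ M, Commute K x)
    (hK : ∀ x ∈ L₁ ++ L₂, Anticommute K x) :
    ∀ x ∈ L₁ ++ M ++ L₂, Anticommute (K * M.prod) x := by
  simp only [List.pairwise_append, List.forall_mem_append] at *
  obtain ⟨⟨-, hM, h₁⟩, -, -, h₂⟩ := h
  refine ⟨⟨fun x hx => ?_, fun x hx => ?_⟩, fun x hx => ?_⟩
  · exact .mul_left (hK.1 x hx) (Anticommute.commute_list_prod_right (h₁ x hx) heven).symm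
  · exact .mul_left' (hKM x hx) (anticommute_list_prod_of_pairwise_anticommute hM heven hx).symm
  · exact .mul_left (hK.2 x hx)
      (Anticommute.commute_list_prod_right (fun y hy => (h₂ y hy x hx).symm) heven).symm

theorem list_prod_mul_self_of_length_eq_two_mul {ε : R} {j : ℕ} (h : M.Pairwise Anticommute)
    (hM : ∀ x ∈ M, x * x = ε) (hε : ε * ε = 1) (hlen : M.length = 2 * j) :
    M.prod * M.prod = (-1) ^ j := by
  have hsq : (M.map fun x => x * x).prod = 1 := by
    rw [List.prod_eq_pow_card _ ε (by simpa using hM), List.length_map, hlen, pow_mul, sq, hε,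
      one_pow]
  have hchoose : (2 * j).choose 2 = j * (2 * j - 1) := by
    rw [Nat.choose_two_right, mul_assoc, Nat.mul_div_cancel_left _ two_pos]
  rw [list_prod_mul_self_of_pairwise_anticommute h, hsq, mul_one, hlen, hchoose]
  obtain rfl | hj := j.eq_zero_or_pos
  · simp
  · rw [mul_comm, pow_mul, Odd.neg_one_pow ⟨j - 1, by omega⟩]

theorem exists_anticommute_of_flip {ε : R} {j : ℕ} (h : (L₁ ++ M ++ L₂).Pairwise Anticommute)
    (hodd : Odd (L₁ ++ M ++ L₂).length) (hJ : J = (L₁ ++ M ++ L₂).prod) (hJJ : J * J = -1)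
    (hM : ∀ x ∈ M, x * x = ε) (hε : ε * ε = 1) (hlen : M.length = 2 * j) (hKK : K * K = 1)
    (hK : ∀ x ∈ L₁ ++ M.map (J * ·) ++ L₂, Anticommute K x) :
    ∃ D, D * D = (-1) ^ j ∧ ∀ x ∈ L₁ ++ M ++ L₂, Anticommute D x := by
  have hJc : ∀ x ∈ L₁ ++ M, Commute J x := fun x hx =>
    hJ ▸ (commute_list_prod_of_pairwise_anticommute h hodd (List.mem_append_left L₂ hx)).symm
  have heven : Even M.length := ⟨j, by omega⟩
  have hKJ : Anticommute K J := .of_flip hJ hJJ hJc hodd heven hK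
  simp only [List.forall_mem_append, List.forall_mem_map] at hK
  have hKM := commute_of_flip hJJ hKJ hK.1.2
  refine ⟨K * M.prod, ?_, anticommute_mul_list_prod_of_flip h heven hKM
    (List.forall_mem_append.2 ⟨hK.1.1, hK.2⟩)⟩
  have hMpair : M.Pairwise Anticommute := (List.pairwise_append.1 (List.pairwise_append.1 h).1).2.1
  rw [(Commute.list_prod_right _ _ hKM).symm.mul_mul_mul_comm, hKK, one_mul,
    list_prod_mul_self_of_length_eq_two_mul hMpair hM hε hlen]

end Flip

section Commutant

variable {R S : Type*} [CommRing R] [AddCommGroup S] [Module R S] {x y : Module.End R S}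

theorem Anticommute.apply_apply (h : Anticommute x y) (s : S) : x (y s) = -y (x s) :=
  LinearMap.congr_fun h s

theorem apply_apply_of_mul_self_eq_one (hx : x * x = 1) (s : S) : x (x s) = s :=
  LinearMap.congr_fun hx s

variable [Invertible (2 : R)]

/-- The `+1` and `-1` eigenspaces of `x` are swapped by `y`, so `S` is the sum of two copies of the
`+1` eigenspace. -/
def eigenspaceProdEquiv (hx : x * x = 1) (hy : y * y = 1) (hxy : Anticommute x y) :
    (LinearMap.eqLocus x 1 × LinearMap.eqLocus x 1) ≃ₗ[R] S where
  toFun w := w.1 + y w.2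
  map_add' v w := by simp only [Prod.fst_add, Prod.snd_add, Submodule.coe_add, map_add]; abel
  map_smul' r w := by simp
  invFun s :=
    have hmem (t : S) : ⅟(2 : R) • (t + x t) ∈ LinearMap.eqLocus x 1 := by
      simp [apply_apply_of_mul_self_eq_one hx, add_comm]
    (⟨_, hmem s⟩, ⟨_, hmem (y s)⟩)
  left_inv := by
    rintro ⟨⟨u, hu : x u = u⟩, ⟨v, hv : x v = v⟩⟩
    ext <;> simp only [map_add, hxy.apply_apply, hu, hv, apply_apply_of_mul_self_eq_one hy]
    · rw [add_add_add_comm, add_neg_cancel, add_zero, smul_add, invOf_two_smul_add_invOf_two_smul]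
    · rw [add_add_add_comm, add_neg_cancel, zero_add, smul_add, invOf_two_smul_add_invOf_two_smul]
  right_inv s := by
    simp only [hxy.apply_apply, map_smul, map_add, map_neg, apply_apply_of_mul_self_eq_one hy]
    rw [← smul_add, add_add_add_comm, add_neg_cancel, add_zero, smul_add,
      invOf_two_smul_add_invOf_two_smul]

theorem exists_algHom_range_eq_centralizer (hx : x * x = 1) (hy : y * y = 1)
    (hxy : Anticommute x y) :
    ∃ (W : Submodule R S) (φ : Module.End R W →ₐ[R] Module.End R S),
      Function.Injective φ ∧ φ.range = Subalgebra.centralizer R {x, y} := by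
  let W := LinearMap.eqLocus x 1
  let e := eigenspaceProdEquiv hx hy hxy
  let φ : Module.End R W →ₐ[R] Module.End R S :=
    (e.conjAlgEquiv R).toAlgHom.comp <|
      (LinearMap.prodMapAlgHom R W W).comp ((AlgHom.id R _).prod (AlgHom.id R _))
  have he : ∀ u v : W, e (u, v) = u + y v := fun _ _ => rfl
  have hφ : ∀ f (u v : W), φ f (e (u, v)) = e (f u, f v) := fun f u v => by
    simp [φ, LinearEquiv.conjAlgEquiv_apply]
  have hW : ∀ u : W, x u = u := fun u => u.2
  have hxe : ∀ u v, x (e (u, v)) = e (u, -v) := fun u v => by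
    simp [he, hxy.apply_apply, hW]
  have hye : ∀ u v, y (e (u, v)) = e (v, u) := fun u v => by
    simp [he, apply_apply_of_mul_self_eq_one hy, add_comm]
  refine ⟨W, φ, fun f g hfg => LinearMap.ext fun u => ?_, le_antisymm ?_ fun T hT => ?_⟩
  · have h := LinearMap.congr_fun hfg (e (u, 0))
    rw [hφ, hφ] at h
    exact congrArg Prod.fst (e.injective h)
  · rintro _ ⟨f, rfl⟩
    change φ f ∈ Subalgebra.centralizer R {x, y}
    simp only [Subalgebra.mem_centralizer_iff, Set.forall_mem_insert, Set.mem_singleton_iff,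
      forall_eq]
    constructor <;> refine LinearMap.ext fun s => ?_ <;> obtain ⟨⟨u, v⟩, rfl⟩ := e.surjective s <;>
      rw [Module.End.mul_apply, Module.End.mul_apply]
    · rw [hφ, hxe, hxe, hφ, map_neg]
    · rw [hφ, hye, hye, hφ]
  · simp only [Subalgebra.mem_centralizer_iff, Set.forall_mem_insert, Set.mem_singleton_iff,
      forall_eq] at hT
    have hTW : ∀ w ∈ W, T w ∈ W := fun w hw =>
      (LinearMap.congr_fun hT.1 w).trans (congrArg T hw)
    refine ⟨T.restrict hTW, LinearMap.ext fun s => ?_⟩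
    obtain ⟨⟨u, v⟩, rfl⟩ := e.surjective s
    have hTy : y (T v) = T (y v) := LinearMap.congr_fun hT.2 v
    exact (hφ _ u v).trans (by simp [he, hTy])

end Commutant

section ComplexStructure

theorem exists_conj_linear_involution (𝕜 V : Type*) [CommSemiring 𝕜] [StarRing 𝕜]
    [AddCommMonoid V] [Module 𝕜 V] [Module.Free 𝕜 V] : ∃ K : V →ₗ⋆[𝕜] V, ∀ v, K (K v) = v := by
  let b := Module.Free.chooseBasis 𝕜 V
  let conj := Finsupp.mapRange.linearMap (α := Module.Free.ChooseBasisIndex 𝕜 V)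
    (starLinearEquiv 𝕜 (A := 𝕜)).toLinearMap
  refine ⟨b.repr.symm.toLinearMap ∘ₛₗ conj ∘ₛₗ b.repr.toLinearMap, fun v => ?_⟩
  have hconj : ∀ f, conj (conj f) = f := fun f => Finsupp.ext fun i => star_star (f i)
  simp [hconj]

variable {S : Type*} [AddCommGroup S] [Module ℝ S] {J : Module.End ℝ S}

/-- The complex vector space structure on `S` in which `Complex.I` acts as `J`. -/
abbrev complexModule (hJ : J * J = -1) : Module ℂ S :=
  .compHom S (Complex.lift ⟨J, hJ⟩).toRingHom

theorem complexModule_smul_def (hJ : J * J = -1) (z : ℂ) (s : S) :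
    letI := complexModule hJ
    z • s = z.re • s + z.im • J s := by
  change Complex.lift ⟨J, hJ⟩ z s = _
  simp [Complex.liftAux_apply]

theorem exists_involution_anticommute (hJ : J * J = -1) :
    ∃ K : Module.End ℝ S, K * K = 1 ∧ Anticommute K J := by
  let := complexModule hJ
  have hsmul := complexModule_smul_def hJ
  obtain ⟨K, hK⟩ := exists_conj_linear_involution ℂ S
  have hreal : ∀ (r : ℝ) (s : S), K (r • s) = r • K s := fun r s => by
    simpa [hsmul] using K.map_smulₛₗ (r : ℂ) s
  refine ⟨{ toFun := K, map_add' := K.map_add, map_smul' := hreal }, LinearMap.ext hK,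
    LinearMap.ext fun s => ?_⟩
  simpa [hsmul] using K.map_smulₛₗ Complex.I s

theorem exists_apply_eq_smul_add_smul [Nontrivial S] [FiniteDimensional ℝ S] (hJ : J * J = -1)
    {X : Module.End ℝ S} (hX : Commute X J) :
    ∃ (a b : ℝ) (v : S), v ≠ 0 ∧ X v = a • v + b • J v := by
  let := complexModule hJ
  have hsmul := complexModule_smul_def hJ
  have : IsScalarTower ℝ ℂ S := ⟨fun r z s => by simp [hsmul, mul_smul]⟩
  have := FiniteDimensional.right ℝ ℂ S
  have hXJ : ∀ s, X (J s) = J (X s) := LinearMap.congr_fun hX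
  let Xℂ : Module.End ℂ S :=
    { toFun := X
      map_add' := X.map_add
      map_smul' := fun z s => by simp [hsmul, hXJ] }
  obtain ⟨z, hz⟩ := Xℂ.exists_eigenvalue
  obtain ⟨v, hv⟩ := hz.exists_hasEigenvector
  exact ⟨z.re, z.im, v, hv.2, hv.apply_eq_smul.trans (hsmul z v)⟩

theorem exists_eq_smul_one_add_smul_of_commute [Nontrivial S] [FiniteDimensional ℝ S] {ι : Type*}
    {γ : ι → Module.End ℝ S}
    (hsimple : ∀ W : Submodule ℝ S, (∀ i, ∀ w ∈ W, γ i w ∈ W) → W = ⊥ ∨ W = ⊤)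
    (hJ : J * J = -1) (hJγ : ∀ i, Commute J (γ i)) {X : Module.End ℝ S} (hXJ : Commute X J)
    (hXγ : ∀ i, Commute X (γ i)) :
    ∃ a b : ℝ, X = a • 1 + b • J := by
  obtain ⟨a, b, v, hv, hXv⟩ := exists_apply_eq_smul_add_smul hJ hXJ
  let N := X - (a • 1 + b • J)
  have hN : ∀ i, Commute N (γ i) := fun i =>
    (hXγ i).sub_left (((Commute.one_left _).smul_left a).add_left ((hJγ i).smul_left b))
  have hinv : ∀ i, ∀ w ∈ LinearMap.ker N, γ i w ∈ LinearMap.ker N := fun i w hw => by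
    rw [LinearMap.mem_ker] at hw ⊢
    calc N (γ i w) = γ i (N w) := LinearMap.congr_fun (hN i) w
      _ = 0 := by rw [hw, map_zero]
  have hvN : v ∈ LinearMap.ker N := by simp [N, hXv]
  have hker : LinearMap.ker N = ⊤ := (hsimple _ hinv).resolve_left fun h =>
    hv <| (Submodule.mem_bot ℝ).1 (h ▸ hvN)
  exact ⟨a, b, sub_eq_zero.1 (LinearMap.ker_eq_top.1 hker)⟩

end ComplexStructure

section Uniqueness

variable {k R : Type*} [CommRing k] [Ring R] [Algebra k R] {D J : R}

theorem smul_add_smul_mul_mul_self (hJ : J * J = -1) (hDJ : Anticommute D J) (a b : k) :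
    (a • 1 + b • J) * D * ((a • 1 + b • J) * D) = (a ^ 2 + b ^ 2) • (D * D) := by
  have hD : D * (a • 1 + b • J) = (a • 1 - b • J) * D := by
    rw [mul_add, mul_smul_comm, mul_smul_comm, hDJ, sub_mul, smul_mul_assoc, smul_mul_assoc,
      one_mul, mul_one, smul_neg, sub_eq_add_neg]
  have hnorm : (a • 1 + b • J) * (a • 1 - b • J) = (a ^ 2 + b ^ 2) • (1 : R) := by
    simp only [add_mul, mul_sub, smul_mul_smul_comm, one_mul, mul_one, hJ, mul_comm b a, smul_neg,
      add_smul, sq]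
    abel
  calc (a • 1 + b • J) * D * ((a • 1 + b • J) * D)
      = (a • 1 + b • J) * (D * (a • 1 + b • J)) * D := by simp only [mul_assoc]
    _ = (a • 1 + b • J) * (a • 1 - b • J) * (D * D) := by rw [hD]; simp only [mul_assoc]
    _ = (a ^ 2 + b ^ 2) • (D * D) := by rw [hnorm, smul_one_mul]

theorem exists_eq_smul_add_smul_mul [FaithfulSMul k R] {α a b : k} {D' : R} (hα : α * α = 1)
    (hJ : J * J = -1) (hDJ : Anticommute D J) (hD : D * D = α • 1) (hD' : D' * D' = α • 1)
    (h : D' * D = a • 1 + b • J) :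
    ∃ a b : k, a ^ 2 + b ^ 2 = 1 ∧ D' = (a • 1 + b • J) * D := by
  have hD'D : D' = ((α * a) • 1 + (α * b) • J) * D := by
    calc D' = α • (D' * (D * D)) := by
          rw [hD, mul_smul_comm, mul_one, smul_smul, hα, one_smul]
      _ = ((α * a) • 1 + (α * b) • J) * D := by
          rw [← mul_assoc, h, mul_smul, mul_smul, ← smul_add, smul_mul_assoc]
  refine ⟨α * a, α * b, ?_, hD'D⟩
  have hnorm : (((α * a) ^ 2 + (α * b) ^ 2) * α) • (1 : R) = α • 1 := by
    rw [mul_smul, ← hD, ← smul_add_smul_mul_mul_self hJ hDJ, ← hD'D, hD', hD]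
  rw [← Algebra.algebraMap_eq_smul_one, ← Algebra.algebraMap_eq_smul_one] at hnorm
  have hα' := FaithfulSMul.algebraMap_injective k R hnorm
  linear_combination α * hα' - ((α * a) ^ 2 + (α * b) ^ 2 - 1) * hα

end Uniqueness

theorem odd_choose_two_add {p q : ℕ} (h : p + 1 ≡ q [MOD 4]) : Odd ((p + q).choose 2 + q) := by
  unfold Nat.ModEq at h
  obtain ⟨m, hm⟩ : ∃ m, p + q = 2 * m + 1 := ⟨(p + q) / 2, by omega⟩
  have hchoose : (2 * m + 1).choose 2 = (2 * m + 1) * m := by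
    rw [Nat.choose_two_right, Nat.add_sub_cancel, mul_left_comm, Nat.mul_div_cancel_left _ two_pos]
  have hodd : Odd (m + q) := Nat.odd_iff.2 (by omega)
  rw [hm, hchoose, show (2 * m + 1) * m + q = 2 * (m * m) + (m + q) by ring]
  exact (even_two_mul _).add_odd hodd

namespace IsCliffordSystem

section Ring

variable {R R' : Type*} [Ring R] [Ring R'] {A A₁ A₂ B B₁ B₂ : List R} {a b c J : R}

theorem of_map {F : Type*} [FunLike F R R'] [RingHomClass F R R'] {f : F}
    (hf : Function.Injective f) (h : IsCliffordSystem (A.map f) (B.map f)) :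
    IsCliffordSystem A B where
  mul_self_left a ha := hf <| by
    rw [map_mul, h.mul_self_left _ (List.mem_map_of_mem ha), map_one]
  mul_self_right b hb := hf <| by
    rw [map_mul, h.mul_self_right _ (List.mem_map_of_mem hb), map_neg, map_one]
  pairwise := by
    have hpair := h.pairwise
    rw [← List.map_append, List.pairwise_map] at hpair
    exact hpair.imp fun {x y} hxy => hf <| by rw [map_mul, hxy, map_neg, map_mul]

theorem of_cons_cons (h : IsCliffordSystem (a :: A) (b :: B)) : IsCliffordSystem A B where
  mul_self_left x hx := h.mul_self_left x (List.mem_cons_of_mem a hx)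
  mul_self_right x hx := h.mul_self_right x (List.mem_cons_of_mem b hx)
  pairwise := h.pairwise.sublist <|
    (List.sublist_cons_self a A).append (List.sublist_cons_self b B)

theorem anticommute_heads (h : IsCliffordSystem (a :: A) (b :: B)) : Anticommute a b :=
  List.rel_of_pairwise_cons h.pairwise (by simp)

theorem anticommute_left_head (h : IsCliffordSystem (a :: A) (b :: B)) :
    ∀ x ∈ A ++ B, Anticommute a x := by
  obtain ⟨hA, -, hAB⟩ := List.pairwise_append.1 h.pairwise
  refine List.forall_mem_append.2 ⟨fun x hx => List.rel_of_pairwise_cons hA hx, fun x hx => ?_⟩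
  exact hAB a List.mem_cons_self x (List.mem_cons_of_mem b hx)

theorem anticommute_right_head (h : IsCliffordSystem (a :: A) (b :: B)) :
    ∀ x ∈ A ++ B, Anticommute b x := by
  obtain ⟨-, hB, hAB⟩ := List.pairwise_append.1 h.pairwise
  refine List.forall_mem_append.2 ⟨fun x hx => ?_, fun x hx => List.rel_of_pairwise_cons hB hx⟩
  exact (hAB x (List.mem_cons_of_mem a hx) b List.mem_cons_self).symm

theorem heads_mul_self (h : IsCliffordSystem (a :: A) (b :: B)) : a * b * (a * b) = 1 := by
  rw [h.anticommute_heads.mul_self_mul, h.mul_self_left a (by simp), h.mul_self_right b (by simp),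
    one_mul, neg_neg]

theorem anticommute_left_heads_mul (h : IsCliffordSystem (a :: A) (b :: B)) :
    Anticommute a (a * b) :=
  .mul_right' (.refl a) h.anticommute_heads

theorem commute_heads_mul (h : IsCliffordSystem (a :: A) (b :: B)) :
    ∀ x ∈ A ++ B, Commute (a * b) x := fun x hx =>
  (h.anticommute_left_head x hx).commute_mul_left (h.anticommute_right_head x hx)

theorem anticommute_mul_heads (h : IsCliffordSystem (a :: A) (b :: B)) {E : R} (hEa : Commute E a)
    (hEc : Commute E (a * b)) (hE : ∀ x ∈ A ++ B, Anticommute E (a * b * x)) :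
    ∀ x ∈ a :: A ++ b :: B, Anticommute (E * (a * b)) x := by
  have ha : Anticommute (E * (a * b)) a := .mul_left' hEa h.anticommute_left_heads_mul.symm
  have hb : Anticommute (E * (a * b)) b := by
    have hab : a * (a * b) = b := by rw [← mul_assoc, h.mul_self_left a (by simp), one_mul]
    have hb' := ha.mul_right (hEc.mul_left (.refl _))
    rwa [hab] at hb'
  have hAB : ∀ x ∈ A ++ B, Anticommute (E * (a * b)) x := fun x hx => by
    have hx' : a * b * (a * b * x) = x := by rw [← mul_assoc, h.heads_mul_self, one_mul]
    exact .mul_left (hx' ▸ Anticommute.mul_right' hEc (hE x hx)) (h.commute_heads_mul x hx)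
  obtain ⟨hA, hB⟩ := List.forall_mem_append.1 hAB
  simp only [List.forall_mem_append, List.forall_mem_cons]
  exact ⟨⟨ha, hA⟩, hb, hB⟩

theorem map_mul_left (h : IsCliffordSystem A B) (hc : c * c = 1)
    (hcAB : ∀ x ∈ A ++ B, Commute c x) :
    IsCliffordSystem (A.map (c * ·)) (B.map (c * ·)) where
  mul_self_left := List.forall_mem_map.2 fun a ha => by
    rw [(hcAB a (List.mem_append_left B ha)).symm.mul_mul_mul_comm, hc, h.mul_self_left a ha,
      one_mul]
  mul_self_right := List.forall_mem_map.2 fun b hb => by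
    rw [(hcAB b (List.mem_append_right A hb)).symm.mul_mul_mul_comm, hc, h.mul_self_right b hb,
      one_mul]
  pairwise := by
    have hpair := pairwise_anticommute_flip (L₁ := []) (L₂ := []) (by simpa using h.pairwise)
      (by simpa using hcAB)
    simpa using hpair

theorem flip_left (h : IsCliffordSystem (A₁ ++ A₂) B) (hJ : J * J = -1)
    (hJc : ∀ x ∈ A₁ ++ A₂ ++ B, Commute J x) : IsCliffordSystem A₁ (A₂.map (J * ·) ++ B) where
  mul_self_left a ha := h.mul_self_left a (List.mem_append_left _ ha)
  mul_self_right := List.forall_mem_append.2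
    ⟨List.forall_mem_map.2 fun a ha => by
      rw [(hJc a (by simp [ha])).symm.mul_mul_mul_comm, hJ,
        h.mul_self_left a (List.mem_append_right _ ha), mul_one], h.mul_self_right⟩
  pairwise := by
    rw [← List.append_assoc]
    exact pairwise_anticommute_flip h.pairwise hJc

theorem flip_right (h : IsCliffordSystem A (B₁ ++ B₂)) (hJ : J * J = -1)
    (hJc : ∀ x ∈ A ++ B₁ ++ B₂, Commute J x) : IsCliffordSystem (A ++ B₁.map (J * ·)) B₂ where
  mul_self_left := List.forall_mem_append.2
    ⟨h.mul_self_left, List.forall_mem_map.2 fun b hb => by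
      rw [(hJc b (by simp [hb])).symm.mul_mul_mul_comm, hJ,
        h.mul_self_right b (List.mem_append_left _ hb), neg_mul_neg, one_mul]⟩
  mul_self_right b hb := h.mul_self_right b (List.mem_append_right _ hb)
  pairwise := pairwise_anticommute_flip (by simpa using h.pairwise) hJc

theorem list_prod_mul_self (h : IsCliffordSystem A B) :
    (A ++ B).prod * (A ++ B).prod = (-1) ^ ((A.length + B.length).choose 2 + B.length) := by
  have hA : (A.map fun x => x * x).prod = 1 := List.prod_eq_one (by simpa using h.mul_self_left)
  have hB : (B.map fun x => x * x).prod = (-1) ^ B.length := by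
    rw [List.prod_eq_pow_card _ (-1) (by simpa using h.mul_self_right), List.length_map]
  rw [list_prod_mul_self_of_pairwise_anticommute h.pairwise, List.map_append, List.prod_append, hA,
    hB, one_mul, List.length_append, pow_add]

theorem list_prod_mul_self_eq_neg_one (h : IsCliffordSystem A B)
    (hlen : A.length + 1 ≡ B.length [MOD 4]) : (A ++ B).prod * (A ++ B).prod = -1 := by
  rw [h.list_prod_mul_self, (odd_choose_two_add hlen).neg_one_pow]

end Ring

section Existence

variable {k : Type*} [CommRing k] [Invertible (2 : k)]

theorem exists_compression {S : Type*} [AddCommGroup S] [Module k S] {a b : Module.End k S}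
    {A B : List (Module.End k S)} (h : IsCliffordSystem (a :: A) (b :: B)) :
    ∃ (W : Submodule k S) (φ : Module.End k W →ₐ[k] Module.End k S)
      (A' B' : List (Module.End k W)),
      IsCliffordSystem A' B' ∧ A'.map φ = A.map (a * b * ·) ∧ B'.map φ = B.map (a * b * ·) ∧
      ∀ f, Commute (φ f) a ∧ Commute (φ f) (a * b) := by
  have hac := h.anticommute_left_heads_mul
  obtain ⟨W, φ, hφ, hrange⟩ :=
    exists_algHom_range_eq_centralizer (h.mul_self_left a (by simp)) h.heads_mul_self hac
  have hmem : ∀ f, f ∈ Set.range φ ↔ Commute a f ∧ Commute (a * b) f := fun f => by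
    rw [← AlgHom.coe_range, hrange, SetLike.mem_coe, Subalgebra.mem_centralizer_iff]
    simp [Commute, SemiconjBy]
  have hlift : ∀ x ∈ A ++ B, a * b * x ∈ Set.range φ := fun x hx =>
    (hmem _).2 ⟨hac.commute_mul_right (h.anticommute_left_head x hx),
      (Commute.refl _).mul_right (h.commute_heads_mul x hx)⟩
  obtain ⟨A', hA'⟩ : A.map (a * b * ·) ∈ Set.range (List.map φ) := by
    rw [Set.range_list_map]
    exact List.forall_mem_map.2 fun x hx => hlift x (List.mem_append_left B hx)
  obtain ⟨B', hB'⟩ : B.map (a * b * ·) ∈ Set.range (List.map φ) := by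
    rw [Set.range_list_map]
    exact List.forall_mem_map.2 fun x hx => hlift x (List.mem_append_right A hx)
  refine ⟨W, φ, A', B', of_map hφ ?_, hA', hB', fun f => ?_⟩
  · rw [hA', hB']
    exact h.of_cons_cons.map_mul_left h.heads_mul_self h.commute_heads_mul
  · exact ((hmem _).1 ⟨f, rfl⟩).imp .symm .symm

theorem exists_involution_anticommute {S : Type*} [AddCommGroup S] [Module ℝ S]
    {A B : List (Module.End ℝ S)} (h : IsCliffordSystem A B) (hlen : B.length = A.length + 1) :
    ∃ D : Module.End ℝ S, D * D = 1 ∧ ∀ x ∈ A ++ B, Anticommute D x := by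
  induction hn : A.length generalizing S with
  | zero =>
    obtain rfl := List.length_eq_zero_iff.1 hn
    obtain ⟨b, rfl⟩ := List.length_eq_one_iff.1 hlen
    simpa using _root_.exists_involution_anticommute (h.mul_self_right b (by simp))
  | succ n ih =>
    obtain ⟨a, A, rfl⟩ := List.exists_of_length_succ A hn
    obtain ⟨b, B, rfl⟩ := List.exists_of_length_succ B hlen
    obtain ⟨W, φ, A', B', h', hA', hB', hφ⟩ := h.exists_compression
    have hlenA : A'.length = A.length := by simpa using congrArg List.length hA'
    have hlenB : B'.length = B.length := by simpa using congrArg List.length hB'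
    simp only [List.length_cons] at hn hlen
    obtain ⟨D, hD, hDAB⟩ := ih h' (by omega) (by omega)
    have hφD : φ D * φ D = 1 := by rw [← map_mul, hD, map_one]
    have hDx : ∀ x ∈ A ++ B, Anticommute (φ D) (a * b * x) := by
      have hmap : ∀ y ∈ (A' ++ B').map φ, Anticommute (φ D) y :=
        List.forall_mem_map.2 fun x hx => by
          rw [Anticommute, ← map_mul, hDAB x hx, map_neg, map_mul]
      rw [List.map_append, hA', hB', ← List.map_append] at hmap
      exact List.forall_mem_map.1 hmap
    obtain ⟨hDa, hDc⟩ := hφ D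
    refine ⟨φ D * (a * b), ?_, h.anticommute_mul_heads hDa hDc hDx⟩
    rw [hDc.symm.mul_mul_mul_comm, hφD, h.heads_mul_self, one_mul]

variable {S : Type*} [AddCommGroup S] [Module ℝ S] {A B : List (Module.End ℝ S)} {j : ℕ}

theorem exists_anticommute_of_length_left (h : IsCliffordSystem A B)
    (hlen : A.length + 1 = B.length + 4 * j) :
    ∃ D : Module.End ℝ S, D * D = (-1) ^ j ∧ ∀ x ∈ A ++ B, Anticommute D x := by
  obtain ⟨A₁, A₂, rfl, hA₂⟩ : ∃ A₁ A₂, A = A₁ ++ A₂ ∧ A₂.length = 2 * j :=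
    ⟨A.take (A.length - 2 * j), A.drop (A.length - 2 * j), (List.take_append_drop _ A).symm,
      by rw [List.length_drop]; omega⟩
  rw [List.length_append] at hlen
  have hodd : Odd (A₁ ++ A₂ ++ B).length := by
    simp only [List.length_append, Nat.odd_iff]; omega
  have hJJ := h.list_prod_mul_self_eq_neg_one (by simp only [List.length_append, Nat.ModEq]; omega)
  obtain ⟨K, hKK, hK⟩ := exists_involution_anticommute
    (h.flip_left hJJ fun x hx =>
      (commute_list_prod_of_pairwise_anticommute h.pairwise hodd hx).symm)
    (by simp only [List.length_append, List.length_map]; omega)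
  exact exists_anticommute_of_flip h.pairwise hodd rfl hJJ
    (fun x hx => h.mul_self_left x (List.mem_append_right A₁ hx)) (one_mul 1) hA₂ hKK
    (by simpa only [List.append_assoc] using hK)

theorem exists_anticommute_of_length_right (h : IsCliffordSystem A B)
    (hlen : A.length + 4 * j + 1 = B.length) :
    ∃ D : Module.End ℝ S, D * D = (-1) ^ j ∧ ∀ x ∈ A ++ B, Anticommute D x := by
  obtain ⟨B₁, B₂, rfl, hB₁⟩ : ∃ B₁ B₂, B = B₁ ++ B₂ ∧ B₁.length = 2 * j :=
    ⟨B.take (2 * j), B.drop (2 * j), (List.take_append_drop _ B).symm,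
      by rw [List.length_take]; omega⟩
  rw [List.length_append] at hlen
  have hpair : (A ++ B₁ ++ B₂).Pairwise Anticommute := by simpa using h.pairwise
  have hodd : Odd (A ++ B₁ ++ B₂).length := by
    simp only [List.length_append, Nat.odd_iff]; omega
  have hJJ : (A ++ B₁ ++ B₂).prod * (A ++ B₁ ++ B₂).prod = -1 := by
    rw [List.append_assoc]
    exact h.list_prod_mul_self_eq_neg_one (by simp only [List.length_append, Nat.ModEq]; omega)
  obtain ⟨K, hKK, hK⟩ := exists_involution_anticommute
    (h.flip_right hJJ fun x hx => (commute_list_prod_of_pairwise_anticommute hpair hodd hx).symm)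
    (by simp only [List.length_append, List.length_map]; omega)
  rw [← List.append_assoc]
  exact exists_anticommute_of_flip hpair hodd rfl hJJ
    (fun x hx => h.mul_self_right x (List.mem_append_left B₂ hx)) (by simp) hB₁ hKK hK

theorem exists_anticommute {α : ℝ} (h : IsCliffordSystem A B)
    (hα : (((A.length : ℤ) - (B.length : ℤ)) ≡ 3 [ZMOD 8] ∧ α = -1) ∨
      (((A.length : ℤ) - (B.length : ℤ)) ≡ 7 [ZMOD 8] ∧ α = 1)) :
    ∃ D : Module.End ℝ S, D * D = α • (1 : Module.End ℝ S) ∧ ∀ x ∈ A ++ B, Anticommute D x := by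
  obtain ⟨j, hj, hlen⟩ : ∃ j : ℕ, α = (-1) ^ j ∧
      (A.length + 1 = B.length + 4 * j ∨ A.length + 4 * j + 1 = B.length) := by
    obtain ⟨hmod, rfl⟩ | ⟨hmod, rfl⟩ := hα <;>
      refine ⟨((A.length : ℤ) - B.length + 1).natAbs / 4, ?_, by unfold Int.ModEq at hmod; omega⟩
    · refine (Odd.neg_one_pow (Nat.odd_iff.2 ?_)).symm
      unfold Int.ModEq at hmod; omega
    · refine (Even.neg_one_pow (Nat.even_iff.2 ?_)).symm
      unfold Int.ModEq at hmod; omega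
  have hα1 : α • (1 : Module.End ℝ S) = (-1) ^ j := by
    rw [hj, ← Algebra.algebraMap_eq_smul_one, map_pow, map_neg, map_one]
  rw [hα1]
  exact hlen.elim h.exists_anticommute_of_length_left h.exists_anticommute_of_length_right

end Existence

end IsCliffordSystem

section CliffordAlgebra

open CliffordAlgebra

variable {k M R : Type*} [CommRing k] [AddCommGroup M] [Module k M] [Ring R] [Algebra k R]

theorem semiconjBy_of_basis {ι : Type*} (b : Module.Basis ι k M) {f g : M →ₗ[k] R} {X : R}
    (h : ∀ i, SemiconjBy X (f (b i)) (g (b i))) (v : M) : SemiconjBy X (f v) (g v) := by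
  have hfg : LinearMap.mulLeft k X ∘ₗ f = LinearMap.mulRight k X ∘ₗ g := b.ext h
  exact LinearMap.congr_fun hfg v

theorem commute_of_commute_ι {Q : QuadraticForm k M} {γ : CliffordAlgebra Q →ₐ[k] R} {X : R}
    (h : ∀ v, Commute X (γ (ι Q v))) (x : CliffordAlgebra Q) : Commute X (γ x) := by
  induction x using CliffordAlgebra.induction with
  | algebraMap r => rw [γ.commutes]; exact Algebra.commute_algebraMap_right r X
  | ι v => exact h v
  | mul x y hx hy => rw [map_mul]; exact hx.mul_right hy
  | add x y hx hy => rw [map_add]; exact hx.add_right hy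

section Coordinates

variable {n : ℕ} {Q : QuadraticForm k (Fin n → k)} {γ : CliffordAlgebra Q →ₐ[k] R} {X : R}

theorem forall_anticommute_map_ι_iff :
    (∀ v, Anticommute X (γ (ι Q v))) ↔
      ∀ x ∈ List.ofFn fun i => γ (ι Q (Pi.single i 1)), Anticommute X x := by
  rw [List.forall_mem_ofFn_iff]
  refine ⟨fun h i => h _, fun h v => .of_semiconjBy ?_⟩
  let f := γ.toLinearMap ∘ₗ ι Q
  exact semiconjBy_of_basis (Pi.basisFun k (Fin n)) (f := f) (g := -f)
    (fun i => by simpa [f] using (h i).semiconjBy) v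

theorem commute_map_of_forall_mem_ofFn
    (h : ∀ x ∈ List.ofFn fun i => γ (ι Q (Pi.single i 1)), Commute X x) (x : CliffordAlgebra Q) :
    Commute X (γ x) := by
  rw [List.forall_mem_ofFn_iff] at h
  let f := γ.toLinearMap ∘ₗ ι Q
  exact commute_of_commute_ι (semiconjBy_of_basis (Pi.basisFun k (Fin n)) (f := f) (g := f)
    fun i => by simpa [f] using (h i).semiconjBy) x

end Coordinates

section Diagonal

variable {n : Type*} [Fintype n] [DecidableEq n] {w : n → k} {Q : QuadraticForm k (n → k)}

theorem apply_single_one_of_diagonal (hQ : ∀ x, Q x = ∑ i, w i * x i ^ 2) (i : n) :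
    Q (Pi.single i 1) = w i := by
  simp [hQ, Pi.single_apply]

theorem isOrtho_single_one_of_diagonal (hQ : ∀ x, Q x = ∑ i, w i * x i ^ 2) {i j : n}
    (hij : i ≠ j) : Q.IsOrtho (Pi.single i 1) (Pi.single j 1) := by
  rw [QuadraticMap.isOrtho_def, hQ, hQ, hQ, ← Finset.sum_add_distrib]
  refine Finset.sum_congr rfl fun l _ => ?_
  have hl : (Pi.single i 1 : n → k) l * (Pi.single j 1 : n → k) l = 0 := by
    obtain rfl | hli := eq_or_ne l i <;> simp [*]
  rw [Pi.add_apply]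
  linear_combination 2 * w l * hl

theorem map_ι_single_one_mul_self (hQ : ∀ x, Q x = ∑ i, w i * x i ^ 2)
    (γ : CliffordAlgebra Q →ₐ[k] R) (i : n) :
    γ (ι Q (Pi.single i 1)) * γ (ι Q (Pi.single i 1)) = algebraMap k R (w i) := by
  rw [← map_mul, ι_sq_scalar, apply_single_one_of_diagonal hQ, γ.commutes]

theorem anticommute_map_ι_single_one (hQ : ∀ x, Q x = ∑ i, w i * x i ^ 2)
    (γ : CliffordAlgebra Q →ₐ[k] R) {i j : n} (hij : i ≠ j) :
    Anticommute (γ (ι Q (Pi.single i 1))) (γ (ι Q (Pi.single j 1))) := by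
  rw [Anticommute, ← map_mul, ι_mul_ι_comm_of_isOrtho (isOrtho_single_one_of_diagonal hQ hij),
    map_neg, map_mul]

end Diagonal

theorem exists_isCliffordSystem {p q : ℕ} {Q : QuadraticForm k (Fin (p + q) → k)}
    (hQ : ∀ x, Q x = ∑ i : Fin (p + q), (if (i : ℕ) < p then (1 : k) else -1) * x i ^ 2)
    (γ : CliffordAlgebra Q →ₐ[k] R) :
    ∃ A B : List R, IsCliffordSystem A B ∧ A.length = p ∧ B.length = q ∧
      A ++ B = List.ofFn fun i => γ (ι Q (Pi.single i 1)) := by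
  let g : Fin (p + q) → R := fun i => γ (ι Q (Pi.single i 1))
  have hsq : ∀ i, g i * g i = algebraMap k R (if (i : ℕ) < p then 1 else -1) :=
    map_ι_single_one_mul_self hQ γ
  have happend : List.ofFn (fun i => g (Fin.castAdd q i)) ++
      List.ofFn (fun i => g (Fin.natAdd p i)) = List.ofFn g := List.ofFn_add.symm
  refine ⟨List.ofFn fun i => g (Fin.castAdd q i), List.ofFn fun i => g (Fin.natAdd p i),
    ⟨?_, ?_, ?_⟩, List.length_ofFn, List.length_ofFn, happend⟩
  · simp [hsq]
  · simp [hsq]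
  · rw [happend, List.pairwise_ofFn]
    exact fun i j hij => anticommute_map_ι_single_one hQ γ hij.ne

end CliffordAlgebra

open CliffordAlgebra in
/-- In signature `p − q ≡ 3, 7 (mod 8)` (`α = −1` resp. `+1`), for an elementary real pinor
representation `γ₀` of `Cl_{p,q}` with `J = γ₀(ω)` the image of the Clifford volume
element, there exists an invertible `D` anticommuting with all `γ₀(ι(v))` and with
`D² = α·id`; every such `D` anticommutes with `J`, and any `D'` satisfying the same two
conditions equals `(a·id + b·J)∘D` with `a² + b² = 1`. -/
theorem exists_conjugation_D (p q : ℕ) (α : ℝ)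
    (hα : (((p : ℤ) - (q : ℤ)) ≡ 3 [ZMOD 8] ∧ α = -1) ∨
      (((p : ℤ) - (q : ℤ)) ≡ 7 [ZMOD 8] ∧ α = 1))
    (Q : QuadraticForm ℝ (Fin (p + q) → ℝ))
    (hQ : ∀ x : Fin (p + q) → ℝ,
      Q x = ∑ i : Fin (p + q), (if (i : ℕ) < p then (1 : ℝ) else -1) * x i ^ 2)
    {S₀ : Type*} [AddCommGroup S₀] [Module ℝ S₀] [Nontrivial S₀] [FiniteDimensional ℝ S₀]
    (γ₀ : CliffordAlgebra Q →ₐ[ℝ] Module.End ℝ S₀)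
    (hsimple : ∀ W : Submodule ℝ S₀,
      (∀ x : CliffordAlgebra Q, ∀ w ∈ W, γ₀ x w ∈ W) → W = ⊥ ∨ W = ⊤)
    (J : Module.End ℝ S₀)
    (hJ : J = γ₀ ((List.ofFn fun i : Fin (p + q) =>
      CliffordAlgebra.ι Q (Pi.single i 1)).prod))
 :
    (∃ D : Module.End ℝ S₀, IsUnit D ∧
      (∀ v : Fin (p + q) → ℝ, D * γ₀ (ι Q v) = -(γ₀ (ι Q v) * D)) ∧
      D * D = α • (1 : Module.End ℝ S₀)) ∧
    (∀ D : Module.End ℝ S₀, IsUnit D →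
      (∀ v : Fin (p + q) → ℝ, D * γ₀ (ι Q v) = -(γ₀ (ι Q v) * D)) →
      D * D = α • (1 : Module.End ℝ S₀) → D * J = -(J * D)) ∧
    (∀ D D' : Module.End ℝ S₀, IsUnit D →
      (∀ v : Fin (p + q) → ℝ, D * γ₀ (ι Q v) = -(γ₀ (ι Q v) * D)) →
      D * D = α • (1 : Module.End ℝ S₀) →
      (∀ v : Fin (p + q) → ℝ, D' * γ₀ (ι Q v) = -(γ₀ (ι Q v) * D')) →
      D' * D' = α • (1 : Module.End ℝ S₀) →
      ∃ a b : ℝ, a ^ 2 + b ^ 2 = 1 ∧ D' = (a • (1 : Module.End ℝ S₀) + b • J) * D) := by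
  obtain ⟨A, B, h, rfl, rfl, hAB⟩ := exists_isCliffordSystem hQ γ₀
  have hJAB : J = (A ++ B).prod := by
    rw [hJ, hAB, map_list_prod, List.map_ofFn, Function.comp_def]
  have hodd : Odd (A ++ B).length := by
    rw [List.length_append, Nat.odd_iff]
    unfold Int.ModEq at hα
    omega
  have hJJ : J * J = -1 := by
    refine hJAB ▸ h.list_prod_mul_self_eq_neg_one ?_
    unfold Int.ModEq at hα
    unfold Nat.ModEq
    omega
  have hαα : α * α = 1 := by obtain ⟨-, rfl⟩ | ⟨-, rfl⟩ := hα <;> norm_num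
  have hJγ : ∀ x, Commute J (γ₀ x) := commute_map_of_forall_mem_ofFn fun x hx =>
    hJAB ▸ (commute_list_prod_of_pairwise_anticommute h.pairwise hodd (hAB ▸ hx)).symm
  have hDJ : ∀ D, (∀ v, Anticommute D (γ₀ (ι Q v))) → Anticommute D J := fun D hD =>
    hJAB ▸ .list_prod_right (hAB ▸ forall_anticommute_map_ι_iff.1 hD) hodd
  refine ⟨?_, fun D _ hD _ => hDJ D hD, fun D D' _ hD hDD hD' hDD' => ?_⟩
  · obtain ⟨D, hDD, hD⟩ := h.exists_anticommute hα
    refine ⟨D, .of_mul_eq_one (α • D) ?_, forall_anticommute_map_ι_iff.2 (hAB ▸ hD), hDD⟩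
    rw [mul_smul_comm, hDD, smul_smul, hαα, one_smul]
  · have hXγ : ∀ x, Commute (D' * D) (γ₀ x) :=
      commute_of_commute_ι fun v => Anticommute.commute_mul_left (hD' v) (hD v)
    obtain ⟨a, b, hX⟩ :=
      exists_eq_smul_one_add_smul_of_commute hsimple hJJ hJγ (hJ ▸ hXγ _) hXγ
    exact exists_eq_smul_add_smul_mul hαα hJJ (hDJ D hD) hDD hDD' hX
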